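/- arXiv:2407.18594 — 2 statements merged into one kernel-verified Lean document; each statement's English description precedes it below -/
import Mathlib

section
/- Let X be a real inner product space, μ, η ∈ ℝ, and (γ0,…,γ4) ∈ ℝ⁵ a solution of the system S2(μ,η). Define the symmetric matrix G ∈ ℝ^{4×4} by G = M₀ + μM₁ + ηM₂ + ημM₃ − LLᵀ, where M₀ has rows (3/2, −1, 1/4, 0), (−1, 3/2, −1, 1/4), (1/4, −1, 3/2, −1), (0, 1/4, −1, 3/2); M₁ has rows (0, 3/2, −11/4, 3/2), (3/2, 0, 3/2, −11/4), (−11/4, 3/2, 0, 3/2), (3/2, −11/4, 3/2, 0); M₂ has rows (0, −3/4, 0, 0), (−3/4, 2, −1, 0), (0, −1, 2, −1), (0, 0, −1, 2); M₃ has rows (0,0,0,0), (0, −3, 11/4, −3/2), (0, 11/4, −3, 11/4), (0, −3/2, 11/4, −3); and L is the lower-triangular Toeplitz matrix with first column (γ0, γ1, γ2, γ3). Then for every sequence (yⁿ)_{n∈ℤ} in X and every n: ⟪Dyⁿ + μ(2·Dyⁿ⁻¹ − Dyⁿ⁻²), yⁿ − η·yⁿ⁻¹⟫ = ‖(yⁿ,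 yⁿ⁻¹, yⁿ⁻², yⁿ⁻³)‖²_G − ‖(yⁿ⁻¹, yⁿ⁻², yⁿ⁻³, yⁿ⁻⁴)‖²_G + ‖Σ_{i=0}^{4} γ_i·yⁿ⁻ⁱ‖², where Dyᵐ := (3/2)yᵐ − 2yᵐ⁻¹ + (1/2)yᵐ⁻². -/
open scoped BigOperators RealInnerProductSpace

/-- The weighted "norm" `‖Y‖²_G = Σ_{i,j} G_{ij} ⟪y_i, y_j⟫` associated with a
matrix `G` and a tuple `Y` in a real inner product space. -/
noncomputable def gnormSq {X : Type*} [NormedAddCommGroup X] [InnerProductSpace ℝ X]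
    {s : ℕ} (G : Matrix (Fin s) (Fin s) ℝ) (Y : Fin s → X) : ℝ :=
  ∑ i : Fin s, ∑ j : Fin s, G i j * ⟪Y i, Y j⟫

/-- The `k = δ = 2` reduced system `S2(μ,η)` for `(γ0, γ1, γ2, γ3, γ4)`. -/
def S2 (μ η γ0 γ1 γ2 γ3 γ4 : ℝ) : Prop :=
  2 * γ0 * γ4 = -μ / 2 ∧
  2 * γ0 * γ3 + 2 * γ1 * γ4 = (1 / 2) * η * μ + 3 * μ ∧
  2 * γ0 * γ2 + 2 * γ1 * γ3 + 2 * γ2 * γ4 = -3 * η * μ - (11 / 2) * μ + 1 / 2 ∧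
  2 * γ0 * γ1 + 2 * γ1 * γ2 + 2 * γ2 * γ3 + 2 * γ3 * γ4
    = (11 / 2) * η * μ - 2 * η + 3 * μ - 2 ∧
  γ0 ^ 2 + γ1 ^ 2 + γ2 ^ 2 + γ3 ^ 2 + γ4 ^ 2 = -3 * η * μ + 2 * η + 3 / 2

/-!
The quadratic form of a symmetric matrix `P` on a window of `s + 1` consecutive terms of a sequence
telescopes as soon as every diagonal of `P` sums to zero: let `G i j` be the sum of the entries of
`P` on the diagonal through `(i, j)`, from the border of the matrix down to `(i, j)`. Then
`P i j = G i j - G (i - 1) (j - 1)`, the second term being zero on the border, and the last row and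
column of `G` vanish, so that the form of `P` is the form of `G` on the first `s` terms minus the
form of `G` on the last `s`.

With `a` and `b` the coefficients of the two sides of the inner product, this applies to
`P = (abᵀ + baᵀ) / 2 - γγᵀ`: the system `S2` says that the diagonals of `P` sum to zero, and the
partial diagonal sums of `γγᵀ` form the matrix `LLᵀ`.
-/

section DiagonalSum

open Matrix

/-- The matrix of partial diagonal sums of `P`: its `(i, j)` entry sums `P` over `(i, j)`,
`(i - 1, j - 1)`, … up to the first row or column, so that its last row and column hold the sums
over full diagonals. The subtractions are not truncated, because `k ≤ min i j`. -/
def diagonalSum {R : Type*} [AddCommMonoid R] {n : ℕ} (P : Matrix (Fin n) (Fin n) R) :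
    Matrix (Fin n) (Fin n) R :=
  of fun i j ↦ ∑ k ∈ Finset.range (min (i : ℕ) j + 1),
    P ⟨i - k, (Nat.sub_le _ _).trans_lt i.isLt⟩ ⟨j - k, (Nat.sub_le _ _).trans_lt j.isLt⟩

section AddCommMonoid

variable {R : Type*} [AddCommMonoid R] {n : ℕ}

theorem diagonalSum_zero_left (P : Matrix (Fin (n + 1)) (Fin (n + 1)) R) (j : Fin (n + 1)) :
    diagonalSum P 0 j = P 0 j := by
  simp [diagonalSum]

theorem diagonalSum_zero_right (P : Matrix (Fin (n + 1)) (Fin (n + 1)) R) (i : Fin (n + 1)) :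
    diagonalSum P i 0 = P i 0 := by
  simp [diagonalSum]

theorem diagonalSum_submatrix_castSucc (P : Matrix (Fin (n + 1)) (Fin (n + 1)) R) :
    diagonalSum (P.submatrix Fin.castSucc Fin.castSucc) =
      (diagonalSum P).submatrix Fin.castSucc Fin.castSucc :=
  rfl

theorem diagonalSum_succ_succ (P : Matrix (Fin (n + 1)) (Fin (n + 1)) R) (i j : Fin n) :
    diagonalSum P i.succ j.succ =
      diagonalSum (P.submatrix Fin.castSucc Fin.castSucc) i j + P i.succ j.succ := by
  simp only [diagonalSum, of_apply, Fin.val_succ, Nat.add_min_add_right]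
  rw [Finset.sum_range_succ']
  simp only [Nat.add_sub_add_right]
  rfl

theorem diagonalSum_isSymm {P : Matrix (Fin n) (Fin n) R} (hP : P.IsSymm) :
    (diagonalSum P).IsSymm := by
  ext i j
  simp [diagonalSum, min_comm, hP.apply]

end AddCommMonoid

theorem diagonalSum_sub {R : Type*} [AddCommGroup R] {n : ℕ} (P Q : Matrix (Fin n) (Fin n) R) :
    diagonalSum (P - Q) = diagonalSum P - diagonalSum Q := by
  ext i j
  simp [diagonalSum]

/-- The lower-triangular Toeplitz matrix with first column `γ`. -/
def lowerToeplitz {R : Type*} [Zero R] {n : ℕ} (γ : Fin n → R) : Matrix (Fin n) (Fin n) R :=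
  of fun i j ↦ if j ≤ i then γ ⟨i - j, (Nat.sub_le _ _).trans_lt i.isLt⟩ else 0

theorem lowerToeplitz_mul_transpose {R : Type*} [NonUnitalNonAssocSemiring R] {n : ℕ}
    (γ : Fin n → R) :
    lowerToeplitz γ * (lowerToeplitz γ)ᵀ = diagonalSum (vecMulVec γ γ) := by
  induction n with
  | zero => exact Subsingleton.elim _ _
  | succ n ih =>
    have first_column (i) : lowerToeplitz γ i 0 = γ i := by simp [lowerToeplitz]
    have first_row (k : Fin n) : lowerToeplitz γ 0 k.succ = 0 := by simp [lowerToeplitz]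
    have shift (i k : Fin n) :
        lowerToeplitz γ i.succ k.succ = lowerToeplitz (Fin.init γ) i k := by
      simp [lowerToeplitz, Fin.init]
    ext i j
    rw [mul_apply, Fin.sum_univ_succ]
    simp only [transpose_apply, first_column]
    cases i using Fin.cases with
    | zero => simp [first_row, diagonalSum_zero_left, vecMulVec_apply]
    | succ i =>
      cases j using Fin.cases with
      | zero => simp [first_row, diagonalSum_zero_right, vecMulVec_apply]
      | succ j =>
        have block := congr_fun₂ (ih (Fin.init γ)) i j
        rw [mul_apply] at block
        simp only [transpose_apply] at block
        simp only [shift, block, diagonalSum_succ_succ, vecMulVec_apply]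
        exact add_comm _ _

/-- The symmetric matrix `(abᵀ + baᵀ) / 2` of the quadratic form `⟪∑ aᵢ yᵢ, ∑ bᵢ yᵢ⟫`. -/
noncomputable def symmOuter {n : ℕ} (a b : Fin n → ℝ) : Matrix (Fin n) (Fin n) ℝ :=
  (1 / 2 : ℝ) • (vecMulVec a b + vecMulVec b a)

theorem symmOuter_isSymm {n : ℕ} (a b : Fin n → ℝ) : (symmOuter a b).IsSymm := by
  simp [IsSymm, symmOuter, add_comm]

/-- The weighting matrix `G` of the summation identity for the inner product of `∑ aᵢ yᵢ` and
`∑ bᵢ yᵢ` with remainder `‖∑ γᵢ yᵢ‖²`. -/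
noncomputable def weightMatrix {s : ℕ} (a b γ : Fin (s + 1) → ℝ) : Matrix (Fin s) (Fin s) ℝ :=
  diagonalSum (symmOuter (Fin.init a) (Fin.init b)) -
    lowerToeplitz (Fin.init γ) * (lowerToeplitz (Fin.init γ))ᵀ

end DiagonalSum

section Telescoping

open Matrix

variable {X : Type*} [NormedAddCommGroup X] [InnerProductSpace ℝ X] {s : ℕ}

theorem gnormSq_sub (P Q : Matrix (Fin s) (Fin s) ℝ) (Y : Fin s → X) :
    gnormSq (P - Q) Y = gnormSq P Y - gnormSq Q Y := by
  simp [gnormSq, sub_mul, Finset.sum_sub_distrib]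

theorem gnormSq_vecMulVec (a b : Fin s → ℝ) (Y : Fin s → X) :
    gnormSq (vecMulVec a b) Y = ⟪∑ i, a i • Y i, ∑ i, b i • Y i⟫ := by
  rw [sum_inner]
  simp [gnormSq, vecMulVec_apply, inner_sum, real_inner_smul_left, real_inner_smul_right,
    mul_assoc, mul_left_comm]

theorem gnormSq_symmOuter (a b : Fin s → ℝ) (Y : Fin s → X) :
    gnormSq (symmOuter a b) Y = ⟪∑ i, a i • Y i, ∑ i, b i • Y i⟫ := by
  calc
    gnormSq (symmOuter a b) Y =
        (1 / 2) * (gnormSq (vecMulVec a b) Y + gnormSq (vecMulVec b a) Y) := by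
      simp only [gnormSq, symmOuter, Matrix.smul_apply, Matrix.add_apply, smul_eq_mul,
        mul_assoc, add_mul, ← Finset.mul_sum, Finset.sum_add_distrib]
    _ = ⟪∑ i, a i • Y i, ∑ i, b i • Y i⟫ := by
      rw [gnormSq_vecMulVec, gnormSq_vecMulVec, real_inner_comm (∑ i, a i • Y i)]
      ring

theorem gnormSq_eq_init {G : Matrix (Fin (s + 1)) (Fin (s + 1)) ℝ}
    (row : ∀ j, G (Fin.last s) j = 0) (col : ∀ i, G i (Fin.last s) = 0) (Y : Fin (s + 1) → X) :
    gnormSq G Y = gnormSq (G.submatrix Fin.castSucc Fin.castSucc) (Fin.init Y) := by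
  simp [gnormSq, Fin.sum_univ_castSucc, row, col, Fin.init]

theorem gnormSq_diagonalSum (P : Matrix (Fin (s + 1)) (Fin (s + 1)) ℝ) (Y : Fin (s + 1) → X) :
    gnormSq (diagonalSum P) Y =
      gnormSq P Y +
        gnormSq (diagonalSum (P.submatrix Fin.castSucc Fin.castSucc)) (Fin.tail Y) := by
  simp only [gnormSq, Fin.sum_univ_succ, diagonalSum_zero_left, diagonalSum_zero_right,
    diagonalSum_succ_succ, add_mul, Finset.sum_add_distrib, Fin.tail]
  ring

theorem gnormSq_eq_sub_of_diagonalSum_last_eq_zero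
    {P : Matrix (Fin (s + 1)) (Fin (s + 1)) ℝ} (hP : P.IsSymm)
    (h : ∀ i, diagonalSum P i (Fin.last s) = 0) (Y : Fin (s + 1) → X) :
    gnormSq P Y =
      gnormSq (diagonalSum (P.submatrix Fin.castSucc Fin.castSucc)) (Fin.init Y) -
        gnormSq (diagonalSum (P.submatrix Fin.castSucc Fin.castSucc)) (Fin.tail Y) := by
  have row (j) : diagonalSum P (Fin.last s) j = 0 := by rw [← (diagonalSum_isSymm hP).apply, h]
  rw [eq_sub_iff_add_eq, ← gnormSq_diagonalSum, gnormSq_eq_init row h,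
    diagonalSum_submatrix_castSucc]

theorem inner_sum_smul_eq_gnormSq_sub_add_norm_sq {a b γ : Fin (s + 1) → ℝ}
    (h : ∀ i, diagonalSum (symmOuter a b) i (Fin.last s) =
      diagonalSum (vecMulVec γ γ) i (Fin.last s))
    (Y : Fin (s + 1) → X) :
    ⟪∑ i, a i • Y i, ∑ i, b i • Y i⟫ =
      gnormSq (weightMatrix a b γ) (Fin.init Y) - gnormSq (weightMatrix a b γ) (Fin.tail Y) +
        ‖∑ i, γ i • Y i‖ ^ 2 := by
  have diagonal_sums (i) :
      diagonalSum (symmOuter a b - vecMulVec γ γ) i (Fin.last s) = 0 := by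
    rw [diagonalSum_sub, Matrix.sub_apply, h, sub_self]
  have symm : (symmOuter a b - vecMulVec γ γ).IsSymm :=
    (symmOuter_isSymm a b).sub (transpose_vecMulVec γ γ)
  have corner :
      diagonalSum ((symmOuter a b - vecMulVec γ γ).submatrix Fin.castSucc Fin.castSucc) =
        weightMatrix a b γ := by
    rw [weightMatrix, lowerToeplitz_mul_transpose, ← diagonalSum_sub]
    rfl
  rw [← sub_eq_iff_eq_add, ← real_inner_self_eq_norm_sq, ← gnormSq_symmOuter, ← gnormSq_vecMulVec,
    ← gnormSq_sub, gnormSq_eq_sub_of_diagonalSum_last_eq_zero symm diagonal_sums, corner]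

end Telescoping

section BDF2

/-- The coefficients of `yⁿ, …, yⁿ⁻⁴` in `Dyⁿ + μ (2 Dyⁿ⁻¹ - Dyⁿ⁻²)`, where
`Dyᵐ = (3/2) yᵐ - 2 yᵐ⁻¹ + (1/2) yᵐ⁻²`. -/
noncomputable def delayedBDF2Coeff (μ : ℝ) : Fin 5 → ℝ :=
  ![3 / 2, -2 + 3 * μ, 1 / 2 - 11 / 2 * μ, 3 * μ, -μ / 2]

/-- The coefficients of `yⁿ, …, yⁿ⁻⁴` in the test vector `yⁿ - η yⁿ⁻¹`. -/
def testCoeff (η : ℝ) : Fin 5 → ℝ :=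
  ![1, -η, 0, 0, 0]

theorem sum_delayedBDF2Coeff_smul {X : Type*} [AddCommGroup X] [Module ℝ X] (μ : ℝ)
    (y0 y1 y2 y3 y4 : X) :
    ∑ i, delayedBDF2Coeff μ i • ![y0, y1, y2, y3, y4] i =
      ((3 / 2 : ℝ) • y0 - (2 : ℝ) • y1 + (1 / 2 : ℝ) • y2) +
        μ • ((2 : ℝ) • ((3 / 2 : ℝ) • y1 - (2 : ℝ) • y2 + (1 / 2 : ℝ) • y3) -
          ((3 / 2 : ℝ) • y2 - (2 : ℝ) • y3 + (1 / 2 : ℝ) • y4)) := by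
  simp [Fin.sum_univ_five, delayedBDF2Coeff]
  module

theorem sum_testCoeff_smul {X : Type*} [AddCommGroup X] [Module ℝ X] (η : ℝ)
    (y0 y1 y2 y3 y4 : X) :
    ∑ i, testCoeff η i • ![y0, y1, y2, y3, y4] i = y0 - η • y1 := by
  simp [Fin.sum_univ_five, testCoeff, sub_eq_add_neg]

theorem diagonalSum_symmOuter_bdf2_last (μ η : ℝ) (i : Fin 5) :
    diagonalSum (symmOuter (delayedBDF2Coeff μ) (testCoeff η)) i (Fin.last 4) =
      ![-μ / 2, (1 / 2) * η * μ + 3 * μ, -3 * η * μ - (11 / 2) * μ + 1 / 2,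
        (11 / 2) * η * μ - 2 * η + 3 * μ - 2, 2 * (-3 * η * μ + 2 * η + 3 / 2)] i / 2 := by
  fin_cases i <;>
    simp [diagonalSum, Finset.sum_range_succ, symmOuter, delayedBDF2Coeff, testCoeff] <;>
    ring

theorem diagonalSum_vecMulVec_five_last {R : Type*} [CommSemiring R] (γ0 γ1 γ2 γ3 γ4 : R)
    (i : Fin 5) :
    diagonalSum (Matrix.vecMulVec ![γ0, γ1, γ2, γ3, γ4] ![γ0, γ1, γ2, γ3, γ4]) i (Fin.last 4) =
      ![γ0 * γ4, γ0 * γ3 + γ1 * γ4, γ0 * γ2 + γ1 * γ3 + γ2 * γ4,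
        γ0 * γ1 + γ1 * γ2 + γ2 * γ3 + γ3 * γ4,
        γ0 ^ 2 + γ1 ^ 2 + γ2 ^ 2 + γ3 ^ 2 + γ4 ^ 2] i := by
  fin_cases i <;>
    simp [diagonalSum, Finset.sum_range_succ, Matrix.vecMulVec_apply] <;>
    ring

theorem s2_iff_diagonalSum_last_eq (μ η γ0 γ1 γ2 γ3 γ4 : ℝ) :
    S2 μ η γ0 γ1 γ2 γ3 γ4 ↔
      ∀ i, diagonalSum (symmOuter (delayedBDF2Coeff μ) (testCoeff η)) i (Fin.last 4) =
        diagonalSum (Matrix.vecMulVec ![γ0, γ1, γ2, γ3, γ4] ![γ0, γ1, γ2, γ3, γ4]) i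
          (Fin.last 4) := by
  simp only [diagonalSum_symmOuter_bdf2_last, diagonalSum_vecMulVec_five_last]
  constructor
  · rintro ⟨h0, h1, h2, h3, h4⟩ i
    fin_cases i <;> simp only [Fin.reduceFinMk, Matrix.cons_val] <;> linarith
  · intro h
    have h0 := h 0
    have h1 := h 1
    have h2 := h 2
    have h3 := h 3
    have h4 := h 4
    simp only [Matrix.cons_val] at h0 h1 h2 h3 h4
    refine ⟨?_, ?_, ?_, ?_, ?_⟩ <;> linarith

theorem lowerToeplitz_four {R : Type*} [Zero R] (γ0 γ1 γ2 γ3 : R) :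
    lowerToeplitz ![γ0, γ1, γ2, γ3] =
      !![γ0, 0, 0, 0;
         γ1, γ0, 0, 0;
         γ2, γ1, γ0, 0;
         γ3, γ2, γ1, γ0] := by
  ext i j
  fin_cases i <;> fin_cases j <;> rfl

theorem init_vec_five {α : Type*} (x0 x1 x2 x3 x4 : α) :
    Fin.init ![x0, x1, x2, x3, x4] = ![x0, x1, x2, x3] := by
  ext i
  fin_cases i <;> rfl

end BDF2

/-- **Summation identity for the decoupled BDF-2 scheme.**
If `(γ0,…,γ4)` solves `S2(μ,η)` and `G = M₀ + μM₁ + ηM₂ + ημM₃ - LLᵀ` is the associated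
`4×4` weighting matrix, then for every sequence in a real inner product space the
BDF-2 telescoping identity holds, where `Dyᵐ = (3/2)yᵐ - 2yᵐ⁻¹ + (1/2)yᵐ⁻²`. -/
theorem summation_identity_bdf2
    {X : Type*} [NormedAddCommGroup X] [InnerProductSpace ℝ X]
    (μ η γ0 γ1 γ2 γ3 γ4 : ℝ) (h : S2 μ η γ0 γ1 γ2 γ3 γ4)
    (y : ℤ → X) (n : ℤ) :
    let M0 : Matrix (Fin 4) (Fin 4) ℝ :=
      !![3/2, -1, 1/4, 0;
         -1, 3/2, -1, 1/4;
         1/4, -1, 3/2, -1;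
         0, 1/4, -1, 3/2]
    let M1 : Matrix (Fin 4) (Fin 4) ℝ :=
      !![0, 3/2, -11/4, 3/2;
         3/2, 0, 3/2, -11/4;
         -11/4, 3/2, 0, 3/2;
         3/2, -11/4, 3/2, 0]
    let M2 : Matrix (Fin 4) (Fin 4) ℝ :=
      !![0, -3/4, 0, 0;
         -3/4, 2, -1, 0;
         0, -1, 2, -1;
         0, 0, -1, 2]
    let M3 : Matrix (Fin 4) (Fin 4) ℝ :=
      !![0, 0, 0, 0;
         0, -3, 11/4, -3/2;
         0, 11/4, -3, 11/4;
         0, -3/2, 11/4, -3]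
    let L : Matrix (Fin 4) (Fin 4) ℝ :=
      !![γ0, 0, 0, 0;
         γ1, γ0, 0, 0;
         γ2, γ1, γ0, 0;
         γ3, γ2, γ1, γ0]
    let G : Matrix (Fin 4) (Fin 4) ℝ := M0 + μ • M1 + η • M2 + (η * μ) • M3 - L * L.transpose
    let D : ℤ → X := fun m =>
      (3 / 2 : ℝ) • y m - (2 : ℝ) • y (m - 1) + (1 / 2 : ℝ) • y (m - 2)
    ⟪D n + μ • ((2 : ℝ) • D (n - 1) - D (n - 2)), y n - η • y (n - 1)⟫
      = gnormSq G ![y n, y (n - 1), y (n - 2), y (n - 3)]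
        - gnormSq G ![y (n - 1), y (n - 2), y (n - 3), y (n - 4)]
        + ‖γ0 • y n + γ1 • y (n - 1) + γ2 • y (n - 2) + γ3 • y (n - 3) + γ4 • y (n - 4)‖ ^ 2 := by
  intro M0 M1 M2 M3 L G D
  set a := delayedBDF2Coeff μ
  set b := testCoeff η
  set γ := ![γ0, γ1, γ2, γ3, γ4]
  set Y := ![y n, y (n - 1), y (n - 2), y (n - 3), y (n - 4)]
  have scheme : ∑ i, a i • Y i = D n + μ • ((2 : ℝ) • D (n - 1) - D (n - 2)) := by
    rw [sum_delayedBDF2Coeff_smul]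
    norm_num [D, sub_sub]
  have test : ∑ i, b i • Y i = y n - η • y (n - 1) := sum_testCoeff_smul ..
  have remainder : ∑ i, γ i • Y i =
      γ0 • y n + γ1 • y (n - 1) + γ2 • y (n - 2) + γ3 • y (n - 3) + γ4 • y (n - 4) :=
    Fin.sum_univ_five _
  have hM : diagonalSum (symmOuter (Fin.init a) (Fin.init b)) =
      M0 + μ • M1 + η • M2 + (η * μ) • M3 := by
    ext i j
    fin_cases i <;> fin_cases j <;>
      simp [M0, M1, M2, M3, a, b, delayedBDF2Coeff, testCoeff, Fin.init, symmOuter, diagonalSum,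
        Matrix.vecMulVec_apply, Finset.sum_range_succ] <;> ring
  have hG : weightMatrix a b γ = G := by
    rw [weightMatrix, hM, init_vec_five, lowerToeplitz_four]
  rw [← scheme, ← test, ← remainder, ← hG, ← init_vec_five _ _ _ _ (y (n - 4))]
  exact inner_sum_smul_eq_gnormSq_sub_add_norm_sq ((s2_iff_diagonalSum_last_eq ..).1 h) Y
end

section
/- There exist constants 0 < c_G ≤ C_G such that for every μ ∈ [0, 1/3] there exist a symmetric positive definite matrix G ∈ ℝ^{4×4} with all eigenvalues in [c_G, C_G] and a vector γ = (γ0,…,γ4) ∈ ℝ⁵ such that for every real inner product space X, every sequence (yⁿ)_{n∈ℤ} in X, and every n: ⟪Dyⁿ + μ(2·Dyⁿ⁻¹ − Dyⁿ⁻²), yⁿ⟫ = ‖(yⁿ, yⁿ⁻¹, yⁿ⁻², yⁿ⁻³)‖²_G − ‖(yⁿ⁻¹, yⁿ⁻², yⁿ⁻³, yⁿ⁻⁴)‖²_G + ‖Σ_{i=0}^{4} γ_i·yⁿ⁻ⁱ‖², where Dyᵐ := (3/2)yᵐ − 2yᵐ⁻¹ + (1/2)yᵐ⁻². (That is, the summation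 assumption with multiplier η = 0 holds for k = δ = 2 whenever the coupling strength ω ≤ 1/3.) -/
open scoped BigOperators RealInnerProductSpace

/-!
Multiplying out, `Dyⁿ + μ(2Dyⁿ⁻¹ - Dyⁿ⁻²) = Σ αᵢ yⁿ⁻ⁱ` with symbol
`α(ζ) = ½(1 - ζ)(3 - ζ)(1 + 2μζ - μζ²)`. As in Dahlquist's theory of G-stability, if
`½(α(ζ) + α(1/ζ)) = γ(ζ)γ(1/ζ)` with `γ` of degree `k`, then `⟪Σ αᵢ yⁿ⁻ⁱ, yⁿ⟫` telescopes with
`G = H Hᵀ`, where `H` is the Hankel matrix `(γᵢ₊ⱼ₊₁)`: writing `vⱼ = Σᵢ γᵢ₊ⱼ yⁿ⁻ⁱ`, the two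
`G`-norms and the square combine to `Σⱼ (‖vⱼ‖² - ‖vⱼ - γⱼ yⁿ‖²)`.

For BDF-2, `γ(ζ) = ½(1 - ζ)² q(ζ)` with `q(ζ)q(1/ζ) = 1 + 3μ + 2μ(ζ + 1/ζ) - μ(ζ² + 1/ζ²)`. The
right-hand side is `1 + 5μ + 4μ cos θ - 4μ cos² θ` at `ζ = exp(iθ)`. For `0 ≤ μ` it is concave in
`cos θ`, and its value `1 - 3μ` at `ζ = -1` is where `μ ≤ 1/3` enters; for `μ < 0` its minimum
`1 + 6μ` is attained at `cos θ = 1/2`.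

The spectrum of `G` is bounded because `tr G ≤ k Σ γᵢ²` and `det G = γₖ²ᵏ`, and the leading
coefficient of `γ` stays away from zero.
-/

section Eigenvalues

open scoped ComplexOrder

variable {𝕜 n : Type*} [RCLike 𝕜] [Fintype n] [DecidableEq n] {A : Matrix n n 𝕜}

lemma eigenvalues_le_re_trace (hA : A.PosSemidef) (i : n) :
    hA.1.eigenvalues i ≤ RCLike.re A.trace := by
  rw [hA.1.trace_eq_sum_eigenvalues, ← RCLike.ofReal_sum, RCLike.ofReal_re]
  exact Finset.single_le_sum (fun j _ => hA.eigenvalues_nonneg j) (Finset.mem_univ i)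

lemma re_det_le_eigenvalues_mul_re_trace_pow (hA : A.PosSemidef) (i : n) :
    RCLike.re A.det ≤ hA.1.eigenvalues i * RCLike.re A.trace ^ (Fintype.card n - 1) := by
  rw [hA.1.det_eq_prod_eigenvalues, ← RCLike.ofReal_prod, RCLike.ofReal_re,
    ← Finset.mul_prod_erase _ _ (Finset.mem_univ i)]
  refine mul_le_mul_of_nonneg_left ?_ (hA.eigenvalues_nonneg i)
  calc ∏ j ∈ Finset.univ.erase i, hA.1.eigenvalues j
      ≤ ∏ _j ∈ Finset.univ.erase i, RCLike.re A.trace :=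
        Finset.prod_le_prod (fun j _ => hA.eigenvalues_nonneg j)
          (fun j _ => eigenvalues_le_re_trace hA j)
    _ = RCLike.re A.trace ^ (Fintype.card n - 1) := by
        rw [Finset.prod_const, Finset.card_erase_of_mem (Finset.mem_univ i), Finset.card_univ]

end Eigenvalues

section HankelGram

variable {R : Type*}

/-- The `k × k` Hankel matrix of `γ₁, γ₂, …`. For `γ` supported on `{0, …, k}` it vanishes below
the antidiagonal, on which it is constantly `γₖ`. -/
def hankel (k : ℕ) (γ : ℕ → R) : Matrix (Fin k) (Fin k) R :=
  Matrix.of fun i j => γ (i + j + 1)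

/-- The matrix `H Hᵀ`, for `H` the Hankel matrix of `γ`: this is the `G` for which a multistep
form with spectral factor `γ` telescopes. -/
def hankelGram [NonUnitalNonAssocSemiring R] (k : ℕ) (γ : ℕ → R) : Matrix (Fin k) (Fin k) R :=
  hankel k γ * (hankel k γ).transpose

/-- The coefficient of `ζʲ` in `γ(ζ)γ(1/ζ)`, for a polynomial `γ(ζ) = Σ γᵢ ζⁱ` of degree at most
`k`. -/
def autocorrelation [NonUnitalNonAssocSemiring R] (k : ℕ) (γ : ℕ → R) (j : ℕ) : R :=
  ∑ i ∈ Finset.range (k + 1), γ i * γ (i + j)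

lemma det_hankelGram [CommRing R] {k : ℕ} {γ : ℕ → R} (hγ : ∀ i, k < i → γ i = 0) :
    (hankelGram k γ).det = γ k ^ (2 * k) := by
  set T := (hankel k γ).submatrix id Fin.revPerm
  have gram_eq : hankelGram k γ = T * T.transpose := by
    rw [Matrix.transpose_submatrix, Matrix.submatrix_mul_equiv, Matrix.submatrix_id_id, hankelGram]
  have isUpperTriangular : T.IsUpperTriangular := fun i j (hij : j < i) => by
    refine hγ _ ?_
    simp only [id, Fin.revPerm_apply, Fin.val_rev]
    omega
  have diag_eq (i : Fin k) : T i i = γ k := by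
    refine congrArg γ ?_
    simp only [id, Fin.revPerm_apply, Fin.val_rev]
    omega
  have det_eq : T.det = γ k ^ k := by
    simp only [Matrix.det_of_isUpperTriangular isUpperTriangular, diag_eq, Fin.prod_const]
  rw [gram_eq, Matrix.det_mul, Matrix.det_transpose, det_eq, ← pow_add, two_mul]

lemma trace_hankelGram_le [CommRing R] [LinearOrder R] [IsStrictOrderedRing R] {k : ℕ} {γ : ℕ → R}
    (hγ : ∀ i, k < i → γ i = 0) :
    (hankelGram k γ).trace ≤ k * autocorrelation k γ 0 := by
  have row_le (i : Fin k) :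
      ∑ j ∈ Finset.range k, γ (i + j + 1) * γ (i + j + 1) ≤ autocorrelation k γ 0 :=
    calc ∑ j ∈ Finset.range k, γ (i + j + 1) * γ (i + j + 1)
        = ∑ j ∈ Finset.range k, γ (i + 1 + j) * γ (i + 1 + j) := by simp only [add_right_comm]
      _ ≤ ∑ m ∈ Finset.range (i + 1 + k), γ m * γ m := by
          rw [Finset.sum_range_add (fun m => γ m * γ m)]
          exact le_add_of_nonneg_left (Finset.sum_nonneg fun m _ => mul_self_nonneg _)
      _ = ∑ m ∈ Finset.range (k + 1), γ m * γ m :=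
          Finset.eventually_constant_sum (fun m hm => by rw [hγ m hm, zero_mul]) (by omega)
  calc (hankelGram k γ).trace
      = ∑ i : Fin k, ∑ j ∈ Finset.range k, γ (i + j + 1) * γ (i + j + 1) :=
        Finset.sum_congr rfl fun i _ =>
          Fin.sum_univ_eq_sum_range (fun j => γ (i + j + 1) * γ (i + j + 1)) k
    _ ≤ ∑ _i : Fin k, autocorrelation k γ 0 := Finset.sum_le_sum fun i _ => row_le i
    _ = k * autocorrelation k γ 0 := by rw [Fin.sum_const, nsmul_eq_mul]

lemma posSemidef_hankelGram (k : ℕ) (γ : ℕ → ℝ) : (hankelGram k γ).PosSemidef := by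
  rw [hankelGram, ← Matrix.conjTranspose_eq_transpose_of_trivial]
  exact Matrix.posSemidef_self_mul_conjTranspose _

lemma posDef_hankelGram {k : ℕ} {γ : ℕ → ℝ} (hγ : ∀ i, k < i → γ i = 0) (hk : γ k ≠ 0) :
    (hankelGram k γ).PosDef := by
  rw [(posSemidef_hankelGram k γ).posDef_iff_det_ne_zero, det_hankelGram hγ]
  exact pow_ne_zero _ hk

lemma eigenvalues_hankelGram_mem_Icc {k : ℕ} {γ : ℕ → ℝ} {c C : ℝ} (hγ : ∀ i, k < i → γ i = 0)
    (hc : 0 ≤ c) (hcγ : c ≤ γ k) (hC : 0 < C) (hγC : k * autocorrelation k γ 0 ≤ C) (i : Fin k) :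
    (posSemidef_hankelGram k γ).1.eigenvalues i ∈ Set.Icc (c ^ (2 * k) / C ^ (k - 1)) C := by
  have hG := posSemidef_hankelGram k γ
  have trace_le : (hankelGram k γ).trace ≤ C := (trace_hankelGram_le hγ).trans hγC
  refine ⟨?_, (eigenvalues_le_re_trace hG i).trans trace_le⟩
  rw [div_le_iff₀ (pow_pos hC _)]
  calc c ^ (2 * k)
      ≤ (hankelGram k γ).det := by
        rw [det_hankelGram hγ]
        exact pow_le_pow_left₀ hc hcγ _
    _ ≤ hG.1.eigenvalues i * (hankelGram k γ).trace ^ (k - 1) := by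
        simpa only [RCLike.re_to_real, Fintype.card_fin] using
          re_det_le_eigenvalues_mul_re_trace_pow hG i
    _ ≤ hG.1.eigenvalues i * C ^ (k - 1) :=
        mul_le_mul_of_nonneg_left (pow_le_pow_left₀ hG.trace_nonneg trace_le _)
          (hG.eigenvalues_nonneg i)

end HankelGram

section Telescoping

variable {X : Type*} [NormedAddCommGroup X] [InnerProductSpace ℝ X]

lemma gnormSq_mul_transpose {s t : ℕ} (A : Matrix (Fin s) (Fin t) ℝ) (Y : Fin s → X) :
    gnormSq (A * A.transpose) Y = ∑ j, ‖∑ i, A i j • Y i‖ ^ 2 := by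
  simp only [gnormSq, ← real_inner_self_eq_norm_sq, sum_inner, inner_sum, real_inner_smul_left,
    real_inner_smul_right, Matrix.mul_apply, Matrix.transpose_apply, Finset.sum_mul]
  rw [Finset.sum_comm_cycle]
  refine Finset.sum_congr rfl fun j _ => Finset.sum_congr rfl fun i _ =>
    Finset.sum_congr rfl fun l _ => ?_
  rw [real_inner_comm]
  ring

lemma gnormSq_hankelGram (k : ℕ) (γ : ℕ → ℝ) (y : ℕ → X) :
    gnormSq (hankelGram k γ) (fun i => y i)
      = ∑ j ∈ Finset.range k, ‖∑ i ∈ Finset.range k, γ (i + j + 1) • y i‖ ^ 2 := by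
  rw [hankelGram, gnormSq_mul_transpose, ← Fin.sum_univ_eq_sum_range]
  refine Finset.sum_congr rfl fun j _ => ?_
  rw [← Fin.sum_univ_eq_sum_range (fun i => γ (i + j + 1) • y i)]
  rfl

lemma sum_mul_inner_sum_eq_sum_autocorrelation (k : ℕ) (γ : ℕ → ℝ) (y : ℕ → X) (x : X) :
    ∑ j ∈ Finset.range (k + 1), γ j * ⟪∑ i ∈ Finset.range (k + 1), γ (i + j) • y i, x⟫
      = ∑ i ∈ Finset.range (k + 1), autocorrelation k γ i * ⟪y i, x⟫ := by
  simp only [autocorrelation, sum_inner, real_inner_smul_left, Finset.mul_sum, Finset.sum_mul]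
  rw [Finset.sum_comm]
  simp only [mul_assoc, add_comm]

theorem gnormSq_hankelGram_sub_shift_add_norm_sq {k : ℕ} {γ : ℕ → ℝ} (hγ : ∀ i, k < i → γ i = 0)
    (y : ℕ → X) :
    gnormSq (hankelGram k γ) (fun i => y i) - gnormSq (hankelGram k γ) (fun i => y (i + 1))
        + ‖∑ i ∈ Finset.range (k + 1), γ i • y i‖ ^ 2
      = 2 * (∑ i ∈ Finset.range (k + 1), autocorrelation k γ i * ⟪y i, y 0⟫)
        - autocorrelation k γ 0 * ‖y 0‖ ^ 2 := by
  set v : ℕ → X := fun j => ∑ i ∈ Finset.range (k + 1), γ (i + j) • y i with hv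
  have current_eq (j : ℕ) : ∑ i ∈ Finset.range k, γ (i + j + 1) • y i = v (j + 1) := by
    simp only [hv, Finset.sum_range_succ _ k, hγ (k + j + 1) (by omega), zero_smul, add_zero,
      ← add_assoc]
  have shifted_eq (j : ℕ) :
      ∑ i ∈ Finset.range k, γ (i + j + 1) • y (i + 1) = v j - γ j • y 0 := by
    simp only [hv, Finset.sum_range_succ', zero_add, add_sub_cancel_right, add_right_comm _ 1 j]
  have shifted_last : v k - γ k • y 0 = 0 := by
    rw [← shifted_eq]
    exact Finset.sum_eq_zero fun i _ => by rw [hγ _ (by omega), zero_smul]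
  have norm_sq_sub (j : ℕ) : ‖v j‖ ^ 2 - ‖v j - γ j • y 0‖ ^ 2
      = 2 * (γ j * ⟪v j, y 0⟫) - γ j * γ j * ‖y 0‖ ^ 2 := by
    rw [norm_sub_sq_real, real_inner_smul_right, norm_smul, mul_pow, Real.norm_eq_abs, sq_abs]
    ring
  calc _ = ∑ j ∈ Finset.range (k + 1), ‖v j‖ ^ 2
        - ∑ j ∈ Finset.range (k + 1), ‖v j - γ j • y 0‖ ^ 2 := by
        rw [gnormSq_hankelGram, gnormSq_hankelGram k γ (fun i => y (i + 1)),
          Finset.sum_range_succ' (fun j => ‖v j‖ ^ 2),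
          Finset.sum_range_succ (fun j => ‖v j - γ j • y 0‖ ^ 2), shifted_last]
        simp only [current_eq, shifted_eq, norm_zero, hv, add_zero]
        ring
    _ = ∑ j ∈ Finset.range (k + 1), (2 * (γ j * ⟪v j, y 0⟫) - γ j * γ j * ‖y 0‖ ^ 2) := by
        simp only [← Finset.sum_sub_distrib, norm_sq_sub]
    _ = _ := by
        rw [Finset.sum_sub_distrib, ← Finset.mul_sum, ← Finset.sum_mul,
          sum_mul_inner_sum_eq_sum_autocorrelation]
        rfl

/-- `γ` is supported on `{0, …, k}` and `½(α(ζ) + α(1/ζ)) = γ(ζ)γ(1/ζ)` holds for the polynomials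
with coefficients `α₀, …, αₖ` and `γ₀, …, γₖ`, written coefficientwise. On the unit circle this
reads `Re α = |γ|²`. -/
structure IsSpectralFactor (k : ℕ) (γ α : ℕ → ℝ) : Prop where
  eq_zero_of_lt : ∀ i, k < i → γ i = 0
  coeff_zero : α 0 = autocorrelation k γ 0
  coeff_succ : ∀ j < k, α (j + 1) = 2 * autocorrelation k γ (j + 1)

theorem IsSpectralFactor.sum_mul_inner_eq {k : ℕ} {γ α : ℕ → ℝ} (h : IsSpectralFactor k γ α)
    (y : ℕ → X) :
    ∑ i ∈ Finset.range (k + 1), α i * ⟪y i, y 0⟫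
      = gnormSq (hankelGram k γ) (fun i => y i) - gnormSq (hankelGram k γ) (fun i => y (i + 1))
        + ‖∑ i ∈ Finset.range (k + 1), γ i • y i‖ ^ 2 := by
  have sum_tail : ∑ j ∈ Finset.range k, α (j + 1) * ⟪y (j + 1), y 0⟫
      = 2 * ∑ j ∈ Finset.range k, autocorrelation k γ (j + 1) * ⟪y (j + 1), y 0⟫ := by
    rw [Finset.mul_sum]
    exact Finset.sum_congr rfl fun j hj => by
      rw [h.coeff_succ j (Finset.mem_range.1 hj), mul_assoc]
  rw [gnormSq_hankelGram_sub_shift_add_norm_sq h.eq_zero_of_lt, Finset.sum_range_succ',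
    Finset.sum_range_succ', sum_tail, h.coeff_zero, real_inner_self_eq_norm_sq]
  ring

end Telescoping

lemma exists_quadratic_spectral_factor {r₀ r₁ r₂ : ℝ} (h_one : 0 ≤ r₀ + 2 * r₁ + 2 * r₂)
    (h_neg_one : 0 ≤ r₀ - 2 * r₁ + 2 * r₂)
    (h_disc : 16 * r₂ ≤ (√(r₀ + 2 * r₁ + 2 * r₂) + √(r₀ - 2 * r₁ + 2 * r₂)) ^ 2) :
    ∃ a b c : ℝ, a ^ 2 + b ^ 2 + c ^ 2 = r₀ ∧ (a + c) * b = r₁ ∧ a * c = r₂ ∧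
      √(r₀ + 2 * r₁ + 2 * r₂) + √(r₀ - 2 * r₁ + 2 * r₂) ≤ 4 * c := by
  -- `p = a + b + c` and `q = a - b + c` are the values of the factor at `1` and `-1`, so that
  -- `b = (p - q) / 2`, and `a`, `c` are the roots of `t² - (p + q) / 2 * t + r₂`.
  set p := √(r₀ + 2 * r₁ + 2 * r₂)
  set q := √(r₀ - 2 * r₁ + 2 * r₂)
  set d := √((p + q) ^ 2 - 16 * r₂)
  have p_sq : p ^ 2 = r₀ + 2 * r₁ + 2 * r₂ := Real.sq_sqrt h_one
  have q_sq : q ^ 2 = r₀ - 2 * r₁ + 2 * r₂ := Real.sq_sqrt h_neg_one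
  have d_sq : d ^ 2 = (p + q) ^ 2 - 16 * r₂ := Real.sq_sqrt (sub_nonneg.2 h_disc)
  refine ⟨(p + q - d) / 4, (p - q) / 2, (p + q + d) / 4, ?_, ?_, ?_, ?_⟩
  · linear_combination (1 / 2) * p_sq + (1 / 2) * q_sq + (1 / 8) * d_sq
  · linear_combination (1 / 4) * p_sq - (1 / 4) * q_sq
  · linear_combination (-1 / 16) * d_sq
  · linarith [Real.sqrt_nonneg ((p + q) ^ 2 - 16 * r₂)]

section BDF2

/-- The coefficients of `½(1 - ζ)(3 - ζ)(1 + 2μζ - μζ²)`, the symbol of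
`Dyⁿ + μ(2Dyⁿ⁻¹ - Dyⁿ⁻²)` for the BDF-2 operator `D`. -/
noncomputable def bdf2Symbol (μ : ℝ) : ℕ → ℝ
  | 0 => 3 / 2
  | 1 => -2 + 3 * μ
  | 2 => 1 / 2 - 11 / 2 * μ
  | 3 => 3 * μ
  | 4 => -μ / 2
  | _ => 0

/-- The coefficients of `½(1 - ζ)²(a + bζ + cζ²)`, the shape of a spectral factor of the BDF-2
symbol. -/
noncomputable def bdf2Factor (a b c : ℝ) : ℕ → ℝ
  | 0 => a / 2
  | 1 => (b - 2 * a) / 2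
  | 2 => (c - 2 * b + a) / 2
  | 3 => (b - 2 * c) / 2
  | 4 => c / 2
  | _ => 0

lemma bdf2Factor_eq_zero_of_lt (a b c : ℝ) : ∀ i, 4 < i → bdf2Factor a b c i = 0
  | _ + 5, _ => rfl

lemma isSpectralFactor_bdf2Factor {μ a b c : ℝ} (h₀ : a ^ 2 + b ^ 2 + c ^ 2 = 1 + 3 * μ)
    (h₁ : (a + c) * b = 2 * μ) (h₂ : a * c = -μ) :
    IsSpectralFactor 4 (bdf2Factor a b c) (bdf2Symbol μ) where
  eq_zero_of_lt := bdf2Factor_eq_zero_of_lt a b c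
  coeff_zero := by
    simp only [autocorrelation, Finset.sum_range_succ, Finset.sum_range_zero, bdf2Factor,
      bdf2Symbol]
    linear_combination (-3 / 2) * h₀ + 2 * h₁ - (1 / 2) * h₂
  coeff_succ j hj := by
    interval_cases j <;>
      simp only [autocorrelation, Finset.sum_range_succ, Finset.sum_range_zero, bdf2Factor,
        bdf2Symbol]
    · linear_combination 2 * h₀ - (7 / 2) * h₁ + 2 * h₂
    · linear_combination (-1 / 2) * h₀ + 2 * h₁ - 3 * h₂
    · linear_combination (-1 / 2) * h₁ + 2 * h₂
    · linear_combination (-1 / 2) * h₂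

lemma exists_isSpectralFactor_bdf2Symbol {μ : ℝ} (hμ : μ ∈ Set.Icc (-(1 / 6) : ℝ) (1 / 3)) :
    ∃ γ, IsSpectralFactor 4 γ (bdf2Symbol μ) ∧ 1 / 8 ≤ γ 4 := by
  obtain ⟨hμ₁, hμ₂⟩ := hμ
  have value_one : 1 + 3 * μ + 2 * (2 * μ) + 2 * -μ = 1 + 5 * μ := by ring
  have value_neg_one : 1 + 3 * μ - 2 * (2 * μ) + 2 * -μ = 1 - 3 * μ := by ring
  have one_nonneg : 0 ≤ 1 + 5 * μ := by linarith
  have neg_one_nonneg : 0 ≤ 1 - 3 * μ := by linarith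
  have disc : 16 * -μ ≤ (√(1 + 5 * μ) + √(1 - 3 * μ)) ^ 2 := by
    rcases le_total 0 μ with hμ₀ | hμ₀
    · exact le_trans (by linarith) (sq_nonneg _)
    have sqrt_mul_ge : -1 - 9 * μ ≤ √(1 + 5 * μ) * √(1 - 3 * μ) := by
      rw [← Real.sqrt_mul one_nonneg]
      exact Real.le_sqrt_of_sq_le (by nlinarith)
    rw [add_sq, Real.sq_sqrt one_nonneg, Real.sq_sqrt neg_one_nonneg]
    linarith
  have one_le_add : 1 ≤ √(1 + 5 * μ) + √(1 - 3 * μ) := by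
    rcases le_total 0 μ with hμ₀ | hμ₀
    · exact le_add_of_le_of_nonneg (Real.one_le_sqrt.2 (by linarith)) (Real.sqrt_nonneg _)
    · exact le_add_of_nonneg_of_le (Real.sqrt_nonneg _) (Real.one_le_sqrt.2 (by linarith))
  obtain ⟨a, b, c, h₀, h₁, h₂, hc⟩ := exists_quadratic_spectral_factor
    (r₀ := 1 + 3 * μ) (r₁ := 2 * μ) (r₂ := -μ) (by rwa [value_one]) (by rwa [value_neg_one])
    (by rwa [value_one, value_neg_one])
  rw [value_one, value_neg_one] at hc
  refine ⟨bdf2Factor a b c, isSpectralFactor_bdf2Factor h₀ h₁ h₂, ?_⟩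
  change 1 / 8 ≤ c / 2
  linarith

/-- The scaled BDF-2 difference operator. -/
noncomputable def bdf2 {X : Type*} [AddCommGroup X] [Module ℝ X] (y : ℤ → X) (m : ℤ) : X :=
  (3 / 2 : ℝ) • y m - (2 : ℝ) • y (m - 1) + (1 / 2 : ℝ) • y (m - 2)

variable {X : Type*} [NormedAddCommGroup X] [InnerProductSpace ℝ X]

lemma inner_bdf2_eq_sum_bdf2Symbol (μ : ℝ) (y : ℤ → X) (n : ℤ) (x : X) :
    ⟪bdf2 y n + μ • ((2 : ℝ) • bdf2 y (n - 1) - bdf2 y (n - 2)), x⟫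
      = ∑ i ∈ Finset.range 5, bdf2Symbol μ i * ⟪y (n - i), x⟫ := by
  simp only [Finset.sum_range_succ, Finset.sum_range_zero, bdf2Symbol, bdf2, inner_add_left,
    inner_sub_left, real_inner_smul_left, sub_sub, Nat.cast_zero, Nat.cast_one, Nat.cast_ofNat,
    sub_zero, Int.reduceAdd]
  ring

lemma IsSpectralFactor.inner_bdf2_eq {μ : ℝ} {γ : ℕ → ℝ} (h : IsSpectralFactor 4 γ (bdf2Symbol μ))
    (y : ℤ → X) (n : ℤ) :
    ⟪bdf2 y n + μ • ((2 : ℝ) • bdf2 y (n - 1) - bdf2 y (n - 2)), y n⟫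
      = gnormSq (hankelGram 4 γ) ![y n, y (n - 1), y (n - 2), y (n - 3)]
        - gnormSq (hankelGram 4 γ) ![y (n - 1), y (n - 2), y (n - 3), y (n - 4)]
        + ‖γ 0 • y n + γ 1 • y (n - 1) + γ 2 • y (n - 2)
            + γ 3 • y (n - 3) + γ 4 • y (n - 4)‖ ^ 2 := by
  have current_eq : ![y n, y (n - 1), y (n - 2), y (n - 3)]
      = fun i : Fin 4 => y (n - (i : ℕ)) := by
    ext i; fin_cases i <;> simp
  have shifted_eq : ![y (n - 1), y (n - 2), y (n - 3), y (n - 4)]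
      = fun i : Fin 4 => y (n - ((i : ℕ) + 1 : ℕ)) := by
    ext i; fin_cases i <;> simp
  have telescoping := h.sum_mul_inner_eq fun i : ℕ => y (n - i)
  rw [Nat.cast_zero, sub_zero] at telescoping
  refine (inner_bdf2_eq_sum_bdf2Symbol μ y n (y n)).trans ?_
  rw [telescoping, current_eq, shifted_eq]
  simp [Finset.sum_range_succ]

end BDF2

theorem summation_assumption_bdf2_general.{u} :
    ∃ cG CG : ℝ, 0 < cG ∧ cG ≤ CG ∧
      ∀ μ ∈ Set.Icc (-(1 / 6) : ℝ) (1 / 3),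
        ∃ (G : Matrix (Fin 4) (Fin 4) ℝ) (hG : G.IsHermitian) (γ0 γ1 γ2 γ3 γ4 : ℝ),
          G.PosDef ∧
          (∀ i, hG.eigenvalues i ∈ Set.Icc cG CG) ∧
          ∀ (X : Type u) (_ : NormedAddCommGroup X) (_ : InnerProductSpace ℝ X)
            (y : ℤ → X) (n : ℤ),
            (let D : ℤ → X := fun m =>
              (3 / 2 : ℝ) • y m - (2 : ℝ) • y (m - 1) + (1 / 2 : ℝ) • y (m - 2)
            ⟪D n + μ • ((2 : ℝ) • D (n - 1) - D (n - 2)), y n⟫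
              = gnormSq G ![y n, y (n - 1), y (n - 2), y (n - 3)]
                - gnormSq G ![y (n - 1), y (n - 2), y (n - 3), y (n - 4)]
                + ‖γ0 • y n + γ1 • y (n - 1) + γ2 • y (n - 2)
                    + γ3 • y (n - 3) + γ4 • y (n - 4)‖ ^ 2) := by
  refine ⟨(1 / 8) ^ (2 * 4) / 6 ^ (4 - 1), 6, by norm_num, by norm_num, fun μ hμ => ?_⟩
  obtain ⟨γ, h, hγ⟩ := exists_isSpectralFactor_bdf2Symbol hμ
  have trace_bound : ((4 : ℕ) : ℝ) * autocorrelation 4 γ 0 ≤ 6 := by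
    rw [← h.coeff_zero, bdf2Symbol]
    norm_num
  exact ⟨hankelGram 4 γ, (posSemidef_hankelGram 4 γ).1, γ 0, γ 1, γ 2, γ 3, γ 4,
    posDef_hankelGram h.eq_zero_of_lt (by linarith),
    eigenvalues_hankelGram_mem_Icc h.eq_zero_of_lt (by norm_num) hγ (by norm_num) trace_bound,
    fun X _ _ y n => h.inner_bdf2_eq y n⟩

/-- **The summation assumption holds for `k = δ = 2` with multiplier `η = 0`
whenever the coupling strength `ω ≤ 1/3`.**
There are constants `0 < c_G ≤ C_G` such that for every `μ ∈ [0,1/3]` there is a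
symmetric positive definite `4×4` matrix `G` with all eigenvalues in `[c_G, C_G]`,
and a vector `γ = (γ0,…,γ4)`, realizing the BDF-2 telescoping identity for every
sequence in every real inner product space, where `Dyᵐ = (3/2)yᵐ - 2yᵐ⁻¹ + (1/2)yᵐ⁻²`. -/
theorem summation_assumption_bdf2 :
    ∃ cG CG : ℝ, 0 < cG ∧ cG ≤ CG ∧
      ∀ μ ∈ Set.Icc (0 : ℝ) (1 / 3),
        ∃ (G : Matrix (Fin 4) (Fin 4) ℝ) (hG : G.IsHermitian) (γ0 γ1 γ2 γ3 γ4 : ℝ),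
          G.PosDef ∧
          (∀ i, hG.eigenvalues i ∈ Set.Icc cG CG) ∧
          ∀ (X : Type) (_ : NormedAddCommGroup X) (_ : InnerProductSpace ℝ X)
            (y : ℤ → X) (n : ℤ),
            (let D : ℤ → X := fun m =>
              (3 / 2 : ℝ) • y m - (2 : ℝ) • y (m - 1) + (1 / 2 : ℝ) • y (m - 2)
            ⟪D n + μ • ((2 : ℝ) • D (n - 1) - D (n - 2)), y n⟫
              = gnormSq G ![y n, y (n - 1), y (n - 2), y (n - 3)]
                - gnormSq G ![y (n - 1), y (n - 2), y (n - 3), y (n - 4)]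
                + ‖γ0 • y n + γ1 • y (n - 1) + γ2 • y (n - 2)
                    + γ3 • y (n - 3) + γ4 • y (n - 4)‖ ^ 2) := by
  obtain ⟨cG, CG, hcG, hle, H⟩ := summation_assumption_bdf2_general
  exact ⟨cG, CG, hcG, hle, fun μ hμ => H μ (Set.Icc_subset_Icc_left (by norm_num) hμ)⟩
end
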